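/- Let I be a closed two-sided ideal of a unital C*-algebra A and let ε > 0. Then every element of R(A/I) is the image under the quotient map of an ε-almost regular element of A. -/

import Mathlib

noncomputable section

/-- A closed two-sided ideal of a topological `ℂ`-algebra `A`. -/
structure ClosedIdeal (A : Type*) [NonUnitalNonAssocRing A] [Module ℂ A] [TopologicalSpace A] : Type _ where
  carrier : Submodule ℂ A
  mul_left_mem : ∀ (a x : A), x ∈ carrier → a * x ∈ carrier
  mul_right_mem : ∀ (a x : A), x ∈ carrier → x * a ∈ carrier
  isClosed : IsClosed (carrier : Set A)

/-- `GL(A)`, the set of invertible elements of the unital algebra `A`. -/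
def glSet (A : Type*) [Monoid A] : Set A := {a | IsUnit a}

/-- `R(A)`: the set of elements `a` of a unital algebra `A` such that for every closed
two-sided ideal `I`, if the image of `a` in `A/I` is left- or right-invertible, then it is
invertible.  (The image of `a` in `A/I` is left invertible iff `1 - b * a ∈ I` for some `b`,
right invertible iff `1 - a * b ∈ I` for some `b`, and invertible iff both hold for one `b`.) -/
def regSet (A : Type*) [Ring A] [Module ℂ A] [TopologicalSpace A] : Set A :=
  {a | ∀ I : ClosedIdeal A,
    ((∃ b, 1 - b * a ∈ I.carrier) ∨ (∃ b, 1 - a * b ∈ I.carrier)) →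
    ∃ b, 1 - b * a ∈ I.carrier ∧ 1 - a * b ∈ I.carrier}

/-- `|t| = (t* t)^(1/2)`, via the continuous functional calculus. -/
noncomputable def cstarAbs {A : Type*} [CStarAlgebra A] (t : A) : A :=
  cfc Real.sqrt (star t * t)

/-- `t` is `ε`-almost regular: the closed two-sided ideal generated by `f_ε(|t|)` equals the
closed two-sided ideal generated by `f_ε(|t*|)`, where `f_ε(x) = max (ε - x) 0`.  (Two elements
generate the same closed two-sided ideal iff they belong to exactly the same closed two-sided
ideals.) -/
def AlmostRegular {A : Type*} [CStarAlgebra A] (ε : ℝ) (t : A) : Prop :=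
  ∀ I : ClosedIdeal A,
    (cfc (fun x : ℝ => max (ε - x) 0) (cstarAbs t) ∈ I.carrier ↔
     cfc (fun x : ℝ => max (ε - x) 0) (cstarAbs (star t)) ∈ I.carrier)

/-!
For a closed ideal `J`, write `f_δ(x) = max (δ - x) 0`. Having `f_δ(|t|) ∈ J` means that `t` is left
invertible modulo `J` with a left inverse of norm at most `δ⁻¹`, up to a slight change of `δ`.
Given a lift `t` of `s`, regularity of `s` says that `f_δ(|t*|)` is, up to an error `z` that is small
in the quotient, in the closed ideal generated by `f_δ(|t|)`, and likewise with `t` and `t*`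
exchanged. There is an invertible self-adjoint contraction `c` mapping to `1` for which `z * c` is
small, and `c * t * c` is the required lift: if `b` is a left inverse of it modulo `J` of norm at
most `ε⁻¹`, then `c * b * c` is one of `t`, so that `f_δ(|t|) ∈ J` and
`f_δ(|t*|) ≡ z ≡ z * c * b * c * t`. The right-hand side has small norm, which forces `t`, and hence
`c * t * c`, to be right invertible modulo `J`.
-/

attribute [local instance] CStarAlgebra.spectralOrder CStarAlgebra.spectralOrderedRing

section SemiconjBy

variable {𝕜 A : Type*} [RCLike 𝕜] {p : A → Prop} [Ring A] [StarRing A] [Algebra 𝕜 A]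
  [TopologicalSpace A] [ContinuousFunctionalCalculus 𝕜 A p] [IsTopologicalRing A] [T2Space A]

lemma semiconjBy_cfc {x a b : A} (h : SemiconjBy x a b) (h_star : SemiconjBy x (star a) (star b))
    (ha : p a) (hb : p b) {f : 𝕜 → 𝕜} (hf : ContinuousOn f (spectrum 𝕜 a ∪ spectrum 𝕜 b)) :
    SemiconjBy x (cfc f a) (cfc f b) := by
  set s := spectrum 𝕜 a ∪ spectrum 𝕜 b
  have : CompactSpace s := isCompact_iff_compactSpace.mp <|
    (ContinuousFunctionalCalculus.isCompact_spectrum a).union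
      (ContinuousFunctionalCalculus.isCompact_spectrum b)
  set φ := cfcHomSuperset ha (s := s) Set.subset_union_left
  set ψ := cfcHomSuperset hb (s := s) Set.subset_union_right
  have hφ : Continuous φ := cfcHomSuperset_continuous ha _
  have hψ : Continuous ψ := cfcHomSuperset_continuous hb _
  have hφ_id : φ (.restrict s <| .id 𝕜) = a := cfcHomSuperset_id ha _
  have hψ_id : ψ (.restrict s <| .id 𝕜) = b := cfcHomSuperset_id hb _
  have key (g : C(s, 𝕜)) : SemiconjBy x (φ g) (ψ g) := by
    induction g using ContinuousMap.induction_on_of_compact with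
    | const r =>
      have hr : ContinuousMap.const s r = algebraMap 𝕜 C(s, 𝕜) r := rfl
      rw [hr, AlgHomClass.commutes, AlgHomClass.commutes]
      exact Algebra.commute_algebraMap_right r x
    | id => rwa [hφ_id, hψ_id]
    | star_id => rwa [map_star, map_star, hφ_id, hψ_id]
    | add g₁ g₂ h₁ h₂ => simpa only [map_add] using h₁.add_right h₂
    | mul g₁ g₂ h₁ h₂ => simpa only [map_mul] using h₁.mul_right h₂
    | frequently g hg => exact hg.mem_of_closed <| isClosed_eq (by fun_prop) (by fun_prop)
  rw [cfc_apply f a ha (hf.mono Set.subset_union_left),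
    cfc_apply f b hb (hf.mono Set.subset_union_right)]
  exact key ⟨_, hf.domRestrict⟩

end SemiconjBy

section CutoffInverse

variable {A : Type*} [CStarAlgebra A] {δ : ℝ} {a : A}

/-- The positive part of `δ - a`, written `f_δ(a)` in the paper, for a self-adjoint element `a`. It
vanishes exactly when `a ≥ δ`. -/
def deficit (δ : ℝ) (a : A) : A := cfc (fun x : ℝ => max (δ - x) 0) a

/-- The inverse of `max a δ` for a self-adjoint element `a` and `δ > 0`, an approximate inverse of
`a` of norm at most `δ⁻¹`. -/
def cutoffInv (δ : ℝ) (a : A) : A := cfc (fun x : ℝ => (max x δ)⁻¹) a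

lemma isSelfAdjoint_deficit : IsSelfAdjoint (deficit δ a) := IsSelfAdjoint.cfc

lemma isSelfAdjoint_cutoffInv : IsSelfAdjoint (cutoffInv δ a) := IsSelfAdjoint.cfc

lemma continuousOn_inv_max (hδ : 0 < δ) (s : Set ℝ) : ContinuousOn (fun x : ℝ => (max x δ)⁻¹) s :=
  ContinuousOn.inv₀ (by fun_prop) fun _ _ => (lt_max_of_lt_right hδ).ne'

lemma commute_cutoffInv : Commute (cutoffInv δ a) a := (Commute.refl a).cfc_real _

lemma commute_cutoffInv_deficit : Commute (cutoffInv δ a) (deficit δ a) := cfc_commute_cfc _ _ a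

lemma norm_cutoffInv_le (hδ : 0 < δ) : ‖cutoffInv δ a‖ ≤ δ⁻¹ := by
  refine norm_cfc_le (by positivity) fun x _ => ?_
  rw [norm_inv, Real.norm_of_nonneg (hδ.le.trans (le_max_right x δ))]
  exact inv_anti₀ hδ (le_max_right x δ)

lemma norm_mul_cutoffInv_le_one (hδ : 0 < δ) (ha : 0 ≤ a) : ‖a * cutoffInv δ a‖ ≤ 1 := by
  have h : a * cutoffInv δ a = cfc (fun x : ℝ => x * (max x δ)⁻¹) a := by
    rw [cfc_mul (fun x => x) _ a (by fun_prop) (continuousOn_inv_max hδ _), cfc_id' ℝ a, cutoffInv]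
  rw [h]
  refine norm_cfc_le zero_le_one fun x hx => ?_
  have hx₀ : 0 ≤ x := spectrum_nonneg_of_nonneg ha hx
  have hmax : 0 < max x δ := lt_max_of_lt_right hδ
  rw [Real.norm_of_nonneg (by positivity), mul_inv_le_iff₀ hmax, one_mul]
  exact le_max_left x δ

lemma add_deficit_mul_cutoffInv (hδ : 0 < δ) (ha : IsSelfAdjoint a) :
    (a + deficit δ a) * cutoffInv δ a = 1 := by
  have h : a + deficit δ a = cfc (fun x : ℝ => x + max (δ - x) 0) a := by
    rw [cfc_add a (fun x => x) _, cfc_id' ℝ a, deficit]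
  rw [h, cutoffInv, ← cfc_mul _ _ a (by fun_prop) (continuousOn_inv_max hδ _), ← cfc_const_one ℝ a]
  refine cfc_congr fun x _ => ?_
  have hmax : x + max (δ - x) 0 = max x δ := by
    rw [← max_add_add_left, add_sub_cancel, add_zero, max_comm]
  simp only [hmax]
  exact mul_inv_cancel₀ (lt_max_of_lt_right hδ).ne'

lemma isUnit_cutoffInv (hδ : 0 < δ) (ha : IsSelfAdjoint a) : IsUnit (cutoffInv δ a) :=
  isUnit_iff_exists.mpr ⟨a + deficit δ a,
    (commute_cutoffInv.add_right commute_cutoffInv_deficit).eq.trans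
      (add_deficit_mul_cutoffInv hδ ha), add_deficit_mul_cutoffInv hδ ha⟩

lemma smul_cutoffInv_mul_deficit (hδ : 0 < δ) :
    δ • cutoffInv δ a * deficit δ a = deficit δ a := by
  have hcont := continuousOn_inv_max hδ (spectrum ℝ a)
  rw [cutoffInv, deficit, ← cfc_smul δ _ a hcont,
    ← cfc_mul (fun x => δ • (max x δ)⁻¹) _ a (hcont.const_smul δ)]
  refine cfc_congr fun x _ => ?_
  simp only [smul_eq_mul]
  rcases le_total x δ with hx | hx
  · rw [max_eq_right hx, mul_inv_cancel₀ hδ.ne', one_mul]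
  · rw [max_eq_right (sub_nonpos.mpr hx), mul_zero]

lemma smul_cutoffInv_eq_one (hδ : 0 < δ) (ha : IsSelfAdjoint a) (h : ‖a‖ ≤ δ) :
    δ • cutoffInv δ a = 1 := by
  nontriviality A
  rw [cutoffInv, ← cfc_smul δ _ a (continuousOn_inv_max hδ _), ← cfc_const_one ℝ a]
  refine cfc_congr fun x hx => ?_
  have hxδ : x ≤ δ := (le_abs_self x).trans ((spectrum.norm_le_norm_of_mem hx).trans h)
  simp only [max_eq_right hxδ, smul_eq_mul, mul_inv_cancel₀ hδ.ne']

lemma one_sub_cutoffInv_sq_mul_sq (hδ : 0 < δ) (ha : IsSelfAdjoint a) :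
    1 - cutoffInv δ a * cutoffInv δ a * (a * a) =
      (1 + a * cutoffInv δ a) * cutoffInv δ a * deficit δ a := by
  have hga : cutoffInv δ a * a = a * cutoffInv δ a := commute_cutoffInv
  have hgf : cutoffInv δ a * deficit δ a = deficit δ a * cutoffInv δ a := commute_cutoffInv_deficit
  have h : deficit δ a * cutoffInv δ a = 1 - a * cutoffInv δ a := by
    rw [← add_deficit_mul_cutoffInv hδ ha, add_mul, add_sub_cancel_left]
  calc 1 - cutoffInv δ a * cutoffInv δ a * (a * a)
      = 1 - cutoffInv δ a * (cutoffInv δ a * a) * a := by noncomm_ring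
    _ = 1 - cutoffInv δ a * a * (cutoffInv δ a * a) := by nth_rw 1 [hga]; noncomm_ring
    _ = (1 + a * cutoffInv δ a) * (1 - a * cutoffInv δ a) := by rw [hga]; noncomm_ring
    _ = (1 + a * cutoffInv δ a) * cutoffInv δ a * deficit δ a := by rw [← h, ← hgf, mul_assoc]

end CutoffInverse

section AbsoluteValue

variable {A : Type*} [CStarAlgebra A]

lemma cstarAbs_eq_abs (t : A) : cstarAbs t = CFC.abs t := by
  rw [CFC.abs, CFC.sqrt_eq_real_sqrt _ (star_mul_self_nonneg t), cstarAbs, cfcₙ_eq_cfc]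

lemma cstarAbs_nonneg (t : A) : 0 ≤ cstarAbs t :=
  cstarAbs_eq_abs t ▸ CFC.abs_nonneg t

lemma cstarAbs_mul_cstarAbs (t : A) : cstarAbs t * cstarAbs t = star t * t :=
  cstarAbs_eq_abs t ▸ CFC.abs_mul_abs t

lemma isSelfAdjoint_cstarAbs (t : A) : IsSelfAdjoint (cstarAbs t) := IsSelfAdjoint.cfc

lemma norm_cstarAbs_mul (t a : A) : ‖cstarAbs t * a‖ = ‖t * a‖ := by
  have h : star (cstarAbs t * a) * (cstarAbs t * a) = star (t * a) * (t * a) := by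
    rw [star_mul, star_mul, (isSelfAdjoint_cstarAbs t).star_eq, mul_assoc, mul_assoc,
      ← mul_assoc (cstarAbs t), cstarAbs_mul_cstarAbs, mul_assoc]
  rw [← mul_self_inj (norm_nonneg _) (norm_nonneg _), ← CStarRing.norm_star_mul_self, h,
    CStarRing.norm_star_mul_self]

lemma semiconjBy_cstarAbs (t : A) : SemiconjBy t (cstarAbs t) (cstarAbs (star t)) := by
  have h : SemiconjBy t (star t * t) (star (star t) * star t) := by
    rw [SemiconjBy, star_star, mul_assoc]
  have ha := IsSelfAdjoint.star_mul_self t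
  have hb := IsSelfAdjoint.star_mul_self (star t)
  exact semiconjBy_cfc h (by rwa [ha.star_eq, hb.star_eq]) ha hb (by fun_prop)

lemma semiconjBy_deficit_cstarAbs (δ : ℝ) (t : A) :
    SemiconjBy t (deficit δ (cstarAbs t)) (deficit δ (cstarAbs (star t))) := by
  have ha := isSelfAdjoint_cstarAbs t
  have hb := isSelfAdjoint_cstarAbs (star t)
  exact semiconjBy_cfc (semiconjBy_cstarAbs t)
    (by rw [ha.star_eq, hb.star_eq]; exact semiconjBy_cstarAbs t) ha hb (by fun_prop)

lemma exists_one_sub_mul_eq_mul_deficit {δ : ℝ} (hδ : 0 < δ) (t : A) :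
    ∃ b k : A, ‖b‖ ≤ δ⁻¹ ∧ ‖k‖ ≤ 2 * δ⁻¹ ∧ 1 - b * t = k * deficit δ (cstarAbs t) := by
  set a := cstarAbs t with ha_def
  have ha : IsSelfAdjoint a := isSelfAdjoint_cstarAbs t
  set g := cutoffInv δ a
  have hg : ‖g‖ ≤ δ⁻¹ := norm_cutoffInv_le hδ
  have hag : ‖a * g‖ ≤ 1 := norm_mul_cutoffInv_le_one hδ (cstarAbs_nonneg t)
  refine ⟨g * g * star t, (1 + a * g) * g, ?_, ?_, ?_⟩
  · have h_star : star (g * g * star t) = t * g * g := by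
      rw [star_mul, star_mul, star_star, isSelfAdjoint_cutoffInv.star_eq, mul_assoc]
    calc ‖g * g * star t‖ = ‖t * g * g‖ := by rw [← norm_star, h_star]
      _ ≤ ‖t * g‖ * ‖g‖ := norm_mul_le _ _
      _ = ‖a * g‖ * ‖g‖ := by rw [ha_def, norm_cstarAbs_mul]
      _ ≤ 1 * δ⁻¹ := by gcongr
      _ = δ⁻¹ := one_mul _
  · calc ‖(1 + a * g) * g‖ = ‖g + a * g * g‖ := by rw [add_mul, one_mul]
      _ ≤ ‖g‖ + ‖a * g‖ * ‖g‖ := (norm_add_le _ _).trans (by gcongr; exact norm_mul_le _ _)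
      _ ≤ δ⁻¹ + 1 * δ⁻¹ := by gcongr
      _ = 2 * δ⁻¹ := by ring
  · rw [mul_assoc (g * g), ← cstarAbs_mul_cstarAbs]
    exact one_sub_cutoffInv_sq_mul_sq hδ ha

lemma map_cstarAbs {B : Type*} [CStarAlgebra B] (φ : A →⋆ₐ[ℂ] B) (t : A) :
    φ (cstarAbs t) = cstarAbs (φ t) := by
  have ht := IsSelfAdjoint.star_mul_self t
  rw [cstarAbs, StarAlgHomClass.map_cfc φ _ _ (by fun_prop) (map_continuous φ) ht (ht.map φ),
    map_mul, map_star, cstarAbs]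

lemma map_deficit {B : Type*} [CStarAlgebra B] (φ : A →⋆ₐ[ℂ] B) (δ : ℝ) {a : A}
    (ha : IsSelfAdjoint a) : φ (deficit δ a) = deficit δ (φ a) :=
  StarAlgHomClass.map_cfc φ _ a (by fun_prop) (map_continuous φ) ha (ha.map φ)

lemma map_cutoffInv {B : Type*} [CStarAlgebra B] (φ : A →⋆ₐ[ℂ] B) {δ : ℝ} (hδ : 0 < δ) {a : A}
    (ha : IsSelfAdjoint a) : φ (cutoffInv δ a) = cutoffInv δ (φ a) :=
  StarAlgHomClass.map_cfc φ _ a (continuousOn_inv_max hδ _) (map_continuous φ) ha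
    (ha.map φ)

end AbsoluteValue

section InvertibilityModuloIdeal

variable {A : Type*} [CStarAlgebra A] {J : ClosedIdeal A} {δ : ℝ} {t b : A}

lemma exists_left_inverse_of_deficit_mem (hδ : 0 < δ) (h : deficit δ (cstarAbs t) ∈ J.carrier) :
    ∃ b, ‖b‖ ≤ δ⁻¹ ∧ 1 - b * t ∈ J.carrier := by
  obtain ⟨b, k, hb, -, hbk⟩ := exists_one_sub_mul_eq_mul_deficit hδ t
  exact ⟨b, hb, hbk ▸ J.mul_left_mem _ _ h⟩

lemma deficit_mem_of_left_inverse (hδ : 0 < δ) (hb : δ * ‖b‖ < 1) (h : 1 - b * t ∈ J.carrier) :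
    deficit δ (cstarAbs t) ∈ J.carrier := by
  set F := deficit δ (cstarAbs t)
  set g := δ • cutoffInv δ (cstarAbs t) with hg
  have hgF : g * F = F := smul_cutoffInv_mul_deficit hδ
  have htg : ‖t * g‖ ≤ δ := by
    rw [hg, mul_smul_comm, norm_smul, Real.norm_of_nonneg hδ.le, ← norm_cstarAbs_mul]
    exact mul_le_of_le_one_right hδ.le (norm_mul_cutoffInv_le_one hδ (cstarAbs_nonneg t))
  have hbtg : ‖b * (t * g)‖ < 1 := calc
    ‖b * (t * g)‖ ≤ ‖b‖ * δ := (norm_mul_le _ _).trans (by gcongr)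
    _ < 1 := by rwa [mul_comm]
  obtain ⟨v, hv⟩ := (isUnit_one_sub_of_norm_lt_one hbtg).exists_left_inv
  have hF : F = v * ((1 - b * t) * F) := calc
    F = v * (1 - b * (t * g)) * F := by rw [hv, one_mul]
    _ = v * (F - b * t * (g * F)) := by noncomm_ring
    _ = v * ((1 - b * t) * F) := by rw [hgF, sub_mul, one_mul]
  rw [hF]
  exact J.mul_left_mem _ _ (J.mul_right_mem _ _ h)

lemma exists_right_inverse_of_deficit_sub_mem {r : A} (hr : 2 * ‖r‖ < δ)
    (h : deficit δ (cstarAbs (star t)) - r ∈ J.carrier) : ∃ b, 1 - t * b ∈ J.carrier := by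
  have hδ : 0 < δ := lt_of_le_of_lt (by positivity) hr
  set F := deficit δ (cstarAbs (star t))
  obtain ⟨b, k, -, hk, hbk⟩ := exists_one_sub_mul_eq_mul_deficit hδ (star t)
  have htb : 1 - t * star b = F * star k := by
    simpa only [star_sub, star_one, star_mul, star_star, isSelfAdjoint_deficit.star_eq]
      using congr_arg star hbk
  have hrk : ‖r * star k‖ < 1 := calc
    ‖r * star k‖ ≤ ‖r‖ * (2 * δ⁻¹) := (norm_mul_le _ _).trans (by rw [norm_star]; gcongr)
    _ = 2 * ‖r‖ / δ := by ring
    _ < 1 := (div_lt_one hδ).mpr hr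
  obtain ⟨v, hv⟩ := (isUnit_one_sub_of_norm_lt_one hrk).exists_right_inv
  refine ⟨star b * v, ?_⟩
  have h_eq : 1 - t * (star b * v) = (F - r) * (star k * v) := calc
    1 - t * (star b * v) = (1 - r * star k) * v - t * star b * v := by rw [hv, mul_assoc]
    _ = (1 - t * star b) * v - r * star k * v := by noncomm_ring
    _ = (F - r) * (star k * v) := by rw [htb]; noncomm_ring
  rw [h_eq]
  exact J.mul_right_mem _ _ h

lemma deficit_star_mem (hb : 1 - t * b ∈ J.carrier) (h : deficit δ (cstarAbs t) ∈ J.carrier) :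
    deficit δ (cstarAbs (star t)) ∈ J.carrier := by
  set F := deficit δ (cstarAbs t)
  set F' := deficit δ (cstarAbs (star t))
  have hF' : F' = F' * (1 - t * b) + t * F * b := by
    rw [(semiconjBy_deficit_cstarAbs δ t).eq]
    noncomm_ring
  rw [hF']
  exact J.carrier.add_mem (J.mul_left_mem _ _ hb) (J.mul_right_mem _ _ (J.mul_left_mem _ _ h))

lemma deficit_mem_of_deficit_star_mem (hb : 1 - b * t ∈ J.carrier)
    (h : deficit δ (cstarAbs (star t)) ∈ J.carrier) : deficit δ (cstarAbs t) ∈ J.carrier := by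
  set F := deficit δ (cstarAbs t)
  set F' := deficit δ (cstarAbs (star t))
  have hF : F = (1 - b * t) * F + b * (F' * t) := by
    rw [← (semiconjBy_deficit_cstarAbs δ t).eq]
    noncomm_ring
  rw [hF]
  exact J.carrier.add_mem (J.mul_right_mem _ _ hb) (J.mul_left_mem _ _ (J.mul_right_mem _ _ h))

lemma almostRegular_of_mem_regSet (hδ : 0 < δ) (ht : t ∈ regSet A) : AlmostRegular δ t := by
  refine fun J => ⟨fun h => ?_, fun h => ?_⟩
  · obtain ⟨b, -, hb⟩ := exists_left_inverse_of_deficit_mem hδ h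
    obtain ⟨b', -, hb'⟩ := ht J (Or.inl ⟨b, hb⟩)
    exact deficit_star_mem hb' h
  · obtain ⟨b, hb⟩ := exists_right_inverse_of_deficit_sub_mem (δ := δ) (r := (0 : A)) (by simpa)
      (by rwa [sub_zero])
    obtain ⟨b', hb', -⟩ := ht J (Or.inr ⟨b, hb⟩)
    exact deficit_mem_of_deficit_star_mem hb' h

lemma AlmostRegular.star (h : AlmostRegular δ t) : AlmostRegular δ (star t) := fun J => by
  rw [star_star]
  exact (h J).symm

end InvertibilityModuloIdeal

namespace ClosedIdeal

section Generated

variable {A : Type*} [NonUnitalNonAssocRing A] [Module ℂ A] [TopologicalSpace A]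

/-- The closed ideal generated by `x`, as the intersection of the closed ideals containing `x`. -/
def generatedBy (x : A) : ClosedIdeal A where
  carrier := ⨅ (J : ClosedIdeal A) (_ : x ∈ J.carrier), J.carrier
  mul_left_mem a y hy := by
    simp only [Submodule.mem_iInf] at hy ⊢
    exact fun J hJ => J.mul_left_mem a y (hy J hJ)
  mul_right_mem a y hy := by
    simp only [Submodule.mem_iInf] at hy ⊢
    exact fun J hJ => J.mul_right_mem a y (hy J hJ)
  isClosed := by
    simp only [Submodule.coe_iInf]
    exact isClosed_iInter fun J => isClosed_iInter fun _ => J.isClosed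

lemma mem_generatedBy {x y : A} :
    y ∈ (generatedBy x).carrier ↔ ∀ J : ClosedIdeal A, x ∈ J.carrier → y ∈ J.carrier := by
  simp only [generatedBy, Submodule.mem_iInf]

end Generated

/-- The closure of the image of a closed ideal under a surjective homomorphism. -/
def map {A B F : Type*} [Ring A] [Algebra ℂ A] [TopologicalSpace A] [Ring B] [Algebra ℂ B]
    [TopologicalSpace B] [IsTopologicalRing B] [ContinuousConstSMul ℂ B] [FunLike F A B]
    [AlgHomClass F ℂ A B] (φ : F) (hφ : Function.Surjective φ) (J : ClosedIdeal A) :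
    ClosedIdeal B where
  carrier := (J.carrier.map (φ : A →ₗ[ℂ] B)).topologicalClosure
  mul_left_mem b y hy := by
    obtain ⟨a, rfl⟩ := hφ b
    refine map_mem_closure (f := (φ a * ·)) (by fun_prop) hy ?_
    rintro _ ⟨x, hx, rfl⟩
    exact ⟨a * x, J.mul_left_mem a x hx, map_mul φ a x⟩
  mul_right_mem b y hy := by
    obtain ⟨a, rfl⟩ := hφ b
    refine map_mem_closure (f := (· * φ a)) (by fun_prop) hy ?_
    rintro _ ⟨x, hx, rfl⟩
    exact ⟨x * a, J.mul_right_mem a x hx, map_mul φ x a⟩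
  isClosed := Submodule.isClosed_topologicalClosure _

end ClosedIdeal

section Lifting

variable {A B : Type*} [CStarAlgebra A] [CStarAlgebra B] (φ : A →⋆ₐ[ℂ] B)

lemma exists_mem_generatedBy_norm_map_deficit_sub_lt (hφ : Function.Surjective φ) {δ η : ℝ}
    (hη : 0 < η) {t : A} (ht : AlmostRegular δ (φ t)) :
    ∃ l ∈ (ClosedIdeal.generatedBy (deficit δ (cstarAbs t))).carrier,
      ‖φ (deficit δ (cstarAbs (star t)) - l)‖ < η := by
  have hmap (u : A) : φ (deficit δ (cstarAbs u)) = deficit δ (cstarAbs (φ u)) := by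
    rw [map_deficit φ δ (isSelfAdjoint_cstarAbs u), map_cstarAbs]
  set G := ClosedIdeal.generatedBy (deficit δ (cstarAbs t))
  have hG : deficit δ (cstarAbs t) ∈ G.carrier := ClosedIdeal.mem_generatedBy.mpr fun _ h => h
  have h : deficit δ (cstarAbs (φ t)) ∈ (G.map φ hφ).carrier :=
    hmap t ▸ subset_closure ⟨_, hG, rfl⟩
  have h_star : deficit δ (cstarAbs (star (φ t))) ∈ (G.map φ hφ).carrier := (ht _).mp h
  obtain ⟨_, ⟨l, hl, rfl⟩, hdist⟩ := Metric.mem_closure_iff.mp h_star η hη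
  refine ⟨l, hl, ?_⟩
  rwa [map_sub, hmap, map_star, ← dist_eq_norm]

lemma exists_isUnit_norm_conj_le {k : ℝ} (hk : 0 < k) {w : A} (hw : 0 ≤ w) (hφw : ‖φ w‖ ≤ k) :
    ∃ c : Aˣ, IsSelfAdjoint (c : A) ∧ ‖(c : A)‖ ≤ 1 ∧ φ c = 1 ∧ ‖(c * w * c : A)‖ ≤ k := by
  have hw_sa : IsSelfAdjoint w := .of_nonneg hw
  have hu : IsUnit (k • cutoffInv k w) := (isUnit_cutoffInv hk hw_sa).smul (Units.mk0 k hk.ne')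
  have hnorm : ‖k • cutoffInv k w‖ ≤ 1 := by
    rw [norm_smul, Real.norm_of_nonneg hk.le, ← mul_inv_cancel₀ hk.ne']
    gcongr
    exact norm_cutoffInv_le hk
  refine ⟨hu.unit, (IsSelfAdjoint.all k).smul isSelfAdjoint_cutoffInv, hnorm, ?_, ?_⟩
  · change φ (k • cutoffInv k w) = 1
    rw [map_real_smul φ (map_continuous φ), map_cutoffInv φ hk hw_sa,
      smul_cutoffInv_eq_one hk (hw_sa.map φ) hφw]
  · calc ‖k • cutoffInv k w * w * k • cutoffInv k w‖
        = ‖k • (k • cutoffInv k w * (w * cutoffInv k w))‖ := by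
          rw [mul_smul_comm, mul_assoc]
      _ ≤ k * (1 * 1) := by
          rw [norm_smul, Real.norm_of_nonneg hk.le]
          gcongr
          exact (norm_mul_le _ _).trans (by gcongr; exact norm_mul_cutoffInv_le_one hk hw)
      _ = k := by ring

lemma exists_isUnit_norm_mul_le {η : ℝ} (hη : 0 < η) {z₁ z₂ : A} (h₁ : ‖φ z₁‖ ≤ η)
    (h₂ : ‖φ z₂‖ ≤ η) :
    ∃ c : Aˣ, IsSelfAdjoint (c : A) ∧ ‖(c : A)‖ ≤ 1 ∧ φ c = 1 ∧
      ‖z₁ * c‖ ≤ 2 * η ∧ ‖z₂ * c‖ ≤ 2 * η := by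
  set w := star z₁ * z₁ + star z₂ * z₂ with hw_def
  have hw₁ : 0 ≤ star z₁ * z₁ := star_mul_self_nonneg z₁
  have hw₂ : 0 ≤ star z₂ * z₂ := star_mul_self_nonneg z₂
  have hφw : ‖φ w‖ ≤ (2 * η) ^ 2 := calc
    ‖φ w‖ ≤ ‖φ z₁‖ * ‖φ z₁‖ + ‖φ z₂‖ * ‖φ z₂‖ := by
      simp only [hw_def, map_add, map_mul, map_star, ← CStarRing.norm_star_mul_self]
      exact norm_add_le _ _
    _ ≤ η * η + η * η := by gcongr
    _ ≤ (2 * η) ^ 2 := by nlinarith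
  obtain ⟨c, hc_sa, hc_norm, hφc, hcwc⟩ :=
    exists_isUnit_norm_conj_le φ (by positivity) (add_nonneg hw₁ hw₂) hφw
  have h_norm_mul (z : A) (hz : star z * z ≤ w) : ‖z * c‖ ≤ 2 * η := by
    refine (sq_le_sq₀ (norm_nonneg _) (by positivity)).mp ?_
    calc ‖z * c‖ ^ 2 = ‖star (c : A) * (star z * z) * c‖ := by
          rw [sq, ← CStarRing.norm_star_mul_self, star_mul]
          simp only [mul_assoc]
      _ ≤ ‖star (c : A) * w * c‖ := CStarAlgebra.norm_le_norm_of_nonneg_of_le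
          (star_left_conjugate_nonneg (star_mul_self_nonneg z) _)
          (star_left_conjugate_le_conjugate hz _)
      _ ≤ (2 * η) ^ 2 := by rwa [hc_sa.star_eq]
  exact ⟨c, hc_sa, hc_norm, hφc, h_norm_mul z₁ (le_add_of_nonneg_right hw₂),
    h_norm_mul z₂ (le_add_of_nonneg_left hw₁)⟩

end Lifting

section Conjugation

variable {A : Type*} [Ring A] [Module ℂ A] [TopologicalSpace A] {J : ClosedIdeal A} {t b : A}

lemma one_sub_conj_mul_mem (c : Aˣ) (h : 1 - b * (c * t * c) ∈ J.carrier) :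
    1 - c * b * c * t ∈ J.carrier := by
  have h_eq : 1 - c * b * c * t = c * (1 - b * (c * t * c)) * ↑c⁻¹ := by
    simp only [mul_sub, sub_mul, mul_one, mul_assoc, Units.mul_inv]
  rw [h_eq]
  exact J.mul_right_mem _ _ (J.mul_left_mem _ _ h)

lemma one_sub_conj_mul_inv_conj_mem (c : Aˣ) (h : 1 - t * b ∈ J.carrier) :
    1 - c * t * c * (↑c⁻¹ * b * ↑c⁻¹) ∈ J.carrier := by
  have h_eq : 1 - c * t * c * (↑c⁻¹ * b * ↑c⁻¹) = c * (1 - t * b) * ↑c⁻¹ := by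
    simp only [mul_sub, sub_mul, mul_one, mul_assoc, Units.mul_inv, Units.mul_inv_cancel_left]
  rw [h_eq]
  exact J.mul_right_mem _ _ (J.mul_left_mem _ _ h)

end Conjugation

section ConjugationDeficit

variable {A : Type*} [CStarAlgebra A] {J : ClosedIdeal A} {t l : A} {δ ε : ℝ} {c : Aˣ}

lemma exists_right_inverse_of_left_inverse_conj (hδ : 0 < δ) (hδε : δ < ε) (hc : ‖(c : A)‖ ≤ 1)
    (hl : l ∈ (ClosedIdeal.generatedBy (deficit δ (cstarAbs t))).carrier)
    (hz : 2 * (‖(deficit δ (cstarAbs (star t)) - l) * c‖ * ‖t‖) < δ * ε)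
    {b : A} (hb_norm : ‖b‖ ≤ ε⁻¹) (hb : 1 - b * (c * t * c) ∈ J.carrier) :
    ∃ b', 1 - t * b' ∈ J.carrier := by
  have hε : 0 < ε := hδ.trans hδε
  set F := deficit δ (cstarAbs (star t))
  have hcbct : 1 - c * b * c * t ∈ J.carrier := one_sub_conj_mul_mem c hb
  have hbc_norm : ‖b * c‖ ≤ ε⁻¹ := calc
    ‖b * c‖ ≤ ε⁻¹ * 1 := (norm_mul_le _ _).trans (by gcongr)
    _ = ε⁻¹ := mul_one _
  have hcbc_norm : δ * ‖c * b * c‖ < 1 := calc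
    δ * ‖c * b * c‖ ≤ δ * (1 * ε⁻¹) := by
      rw [mul_assoc (c : A)]
      gcongr
      exact (norm_mul_le _ _).trans (by gcongr)
    _ < 1 := by rwa [one_mul, ← div_eq_mul_inv, div_lt_one hε]
  have hlJ : l ∈ J.carrier :=
    ClosedIdeal.mem_generatedBy.mp hl J (deficit_mem_of_left_inverse hδ hcbc_norm hcbct)
  have hFJ : F - (F - l) * c * (b * c * t) ∈ J.carrier := by
    have h_eq : F - (F - l) * c * (b * c * t) = F * (1 - c * b * c * t) + l * (c * b * c * t) := by
      noncomm_ring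
    rw [h_eq]
    exact J.carrier.add_mem (J.mul_left_mem _ _ hcbct) (J.mul_right_mem _ _ hlJ)
  have hr : 2 * ‖(F - l) * c * (b * c * t)‖ < δ := calc
    2 * ‖(F - l) * c * (b * c * t)‖ ≤ 2 * (‖(F - l) * c‖ * (ε⁻¹ * ‖t‖)) := by
      gcongr
      refine (norm_mul_le _ _).trans ?_
      gcongr
      exact (norm_mul_le _ _).trans (by gcongr)
    _ = 2 * (‖(F - l) * c‖ * ‖t‖) / ε := by ring
    _ < δ := (div_lt_iff₀ hε).mpr hz
  exact exists_right_inverse_of_deficit_sub_mem hr hFJ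

lemma deficit_star_conj_mem (hδ : 0 < δ) (hδε : δ < ε) (hc : ‖(c : A)‖ ≤ 1)
    (hl : l ∈ (ClosedIdeal.generatedBy (deficit δ (cstarAbs t))).carrier)
    (hz : 2 * (‖(deficit δ (cstarAbs (star t)) - l) * c‖ * ‖t‖) < δ * ε)
    (h : deficit ε (cstarAbs (c * t * c)) ∈ J.carrier) :
    deficit ε (cstarAbs (star (c * t * c))) ∈ J.carrier := by
  obtain ⟨b, hb_norm, hb⟩ := exists_left_inverse_of_deficit_mem (hδ.trans hδε) h
  obtain ⟨b', hb'⟩ := exists_right_inverse_of_left_inverse_conj hδ hδε hc hl hz hb_norm hb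
  exact deficit_star_mem (one_sub_conj_mul_inv_conj_mem c hb') h

end ConjugationDeficit

theorem exists_almostRegular_lift_general {A Q : Type*} [CStarAlgebra A] [CStarAlgebra Q]
    (π : A →⋆ₐ[ℂ] Q) (hsurj : Function.Surjective π) {δ ε : ℝ} (hδ : 0 < δ) (hδε : δ < ε) {s : Q}
    (hs : AlmostRegular δ s) : ∃ t : A, AlmostRegular ε t ∧ π t = s := by
  obtain ⟨t, rfl⟩ := hsurj s
  obtain ⟨η, hη, hηt⟩ := exists_pos_mul_lt (mul_pos hδ (hδ.trans hδε)) (4 * ‖t‖)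
  obtain ⟨l₁, hl₁, hz₁⟩ := exists_mem_generatedBy_norm_map_deficit_sub_lt π hsurj hη hs
  obtain ⟨l₂, hl₂, hz₂⟩ := exists_mem_generatedBy_norm_map_deficit_sub_lt π hsurj hη (t := star t)
    (by rw [map_star]; exact hs.star)
  obtain ⟨c, hc_sa, hc_norm, hπc, hz₁c, hz₂c⟩ := exists_isUnit_norm_mul_le π hη hz₁.le hz₂.le
  have hsmall {z : A} (hz : ‖z * c‖ ≤ 2 * η) : 2 * (‖z * c‖ * ‖t‖) < δ * ε := calc
    2 * (‖z * c‖ * ‖t‖) ≤ 2 * (2 * η * ‖t‖) := by gcongr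
    _ = 4 * ‖t‖ * η := by ring
    _ < δ * ε := hηt
  have h_star : star (c * t * c : A) = c * star t * c := by
    rw [star_mul, star_mul, hc_sa.star_eq, mul_assoc]
  refine ⟨c * t * c, fun J => ⟨?_, fun h => ?_⟩, by rw [map_mul, map_mul, hπc, one_mul, mul_one]⟩
  · exact deficit_star_conj_mem hδ hδε hc_norm hl₁ (hsmall hz₁c)
  · have := deficit_star_conj_mem hδ hδε hc_norm hl₂ (by rw [norm_star]; exact hsmall hz₂c)
      (h_star ▸ h)
    rwa [← h_star, star_star] at this

/-- Let `I` be a closed two-sided ideal of a unital C*-algebra `A`, with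
quotient map `π : A → A/I` (realized as a surjective star homomorphism onto a unital
C*-algebra `Q` with kernel `I`), and let `ε > 0`.  Every element of `R(A/I)` is the image of
an `ε`-almost regular element of `A`. -/
theorem exists_almostRegular_lift {A : Type*} [CStarAlgebra A] (I : ClosedIdeal A)
    (Q : Type*) [CStarAlgebra Q] (π : A →⋆ₐ[ℂ] Q) (hsurj : Function.Surjective π)
    (hker : ∀ x : A, π x = 0 ↔ x ∈ I.carrier) (ε : ℝ) (hε : 0 < ε)
    (s : Q) (hs : s ∈ regSet Q) :
    ∃ t : A, AlmostRegular ε t ∧ π t = s := by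
  exact exists_almostRegular_lift_general π hsurj (half_pos hε) (half_lt_self hε)
    (almostRegular_of_mem_regSet (half_pos hε) hs)
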